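/- There exist positive constants C and σ₀ such that for every σ ∈ (0, σ₀) and every t > 0, sup over x ∈ ℝ of |(V^{R₁}, U^{R₁}, ℰ^{R₁})(t,x) − (v^{r₁}, u^{r₁}, E^{r₁})(x/t)| ≤ (C/t) [ σ ln(1+t) + σ |ln σ| ], where (v^{r₁}, u^{r₁}, E^{r₁})(x/t) is the exact self-similar 1-rarefaction wave solution of the Euler Riemann problem and ℰ^{R₁} = Θ^{R₁} + |U^{R₁}|²/2. -/

import Mathlib

open MeasureTheory Real
open scoped RealInnerProductSpace BigOperators

noncomputable section

/-- The velocity space ℝ³. -/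
abbrev V3 : Type := EuclideanSpace ℝ (Fin 3)

/-- Build a vector of ℝ³ from three coordinates. -/
def vec3 (a b c : ℝ) : V3 := (WithLp.equiv 2 (Fin 3 → ℝ)).symm ![a, b, c]

/-- The gas constant `R = 2/3`. -/
def gasR : ℝ := 2 / 3

/-- Maxwellian `M_{[v,u,θ]}` with specific volume `v` (density `1/v`),
bulk velocity `u` and temperature `θ`. -/
def maxwellian (v : ℝ) (u : V3) (θ : ℝ) (ξ : V3) : ℝ :=
  (1 / v) * (2 * Real.pi * gasR * θ) ^ (-(3 : ℝ) / 2) *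
    Real.exp (-‖ξ - u‖ ^ 2 / (2 * gasR * θ))

/-- Maxwellian written with density `ρ`. -/
def maxwellianD (ρ : ℝ) (u : V3) (θ : ℝ) (ξ : V3) : ℝ :=
  ρ * (2 * Real.pi * gasR * θ) ^ (-(3 : ℝ) / 2) *
    Real.exp (-‖ξ - u‖ ^ 2 / (2 * gasR * θ))

/-- The unit sphere in velocity space. -/
abbrev Sph : Type := Metric.sphere (0 : V3) 1

/-- The hard-sphere Boltzmann collision operator. -/
def collQ (f g : V3 → ℝ) (ξ : V3) : ℝ :=
  (1 / 2) *
    ∫ ξs : V3,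
      (∫ Ω in {Ω : Sph | 0 ≤ ⟪ξ - ξs, (Ω : V3)⟫},
        ((f (ξ - ⟪ξ - ξs, (Ω : V3)⟫ • (Ω : V3)) * g (ξs + ⟪ξ - ξs, (Ω : V3)⟫ • (Ω : V3)) +
            f (ξs + ⟪ξ - ξs, (Ω : V3)⟫ • (Ω : V3)) * g (ξ - ⟪ξ - ξs, (Ω : V3)⟫ • (Ω : V3)) -
            f ξ * g ξs - f ξs * g ξ) * |⟪ξ - ξs, (Ω : V3)⟫|)
        ∂((volume : Measure V3).toSphere))

/-- Weighted L² norm `‖g‖_{L²_ξ(1/√M)}`. -/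
def wL2 (M g : V3 → ℝ) : ℝ := Real.sqrt (∫ ξ : V3, (g ξ) ^ 2 / M ξ)

/-- `g` is microscopic: orthogonal to the five collision invariants
(equivalently, to the null space of the linearized collision operator). -/
def microscopic (g : V3 → ℝ) : Prop :=
  (∫ ξ : V3, g ξ) = 0 ∧ (∀ i : Fin 3, (∫ ξ : V3, ξ i * g ξ) = 0) ∧
    (∫ ξ : V3, ‖ξ‖ ^ 2 * g ξ) = 0

/-- Density moment. -/
def mDen (F : V3 → ℝ) : ℝ := ∫ ξ : V3, F ξ
/-- Specific volume of a distribution. -/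
def mVol (F : V3 → ℝ) : ℝ := (mDen F)⁻¹
/-- Bulk velocity components. -/
def mVel (F : V3 → ℝ) (i : Fin 3) : ℝ := mVol F * ∫ ξ : V3, ξ i * F ξ
/-- Bulk velocity as a vector. -/
def mVelV (F : V3 → ℝ) : V3 := vec3 (mVel F 0) (mVel F 1) (mVel F 2)
/-- Specific total energy. -/
def mEngy (F : V3 → ℝ) : ℝ := mVol F * ∫ ξ : V3, (‖ξ‖ ^ 2 / 2) * F ξ
/-- Temperature. -/
def mTemp (F : V3 → ℝ) : ℝ :=
  mEngy F - (mVel F 0 ^ 2 + mVel F 1 ^ 2 + mVel F 2 ^ 2) / 2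

/-- First Lagrangian characteristic speed `λ₁(v,θ) = −√(10θ)/(3v)`. -/
def lam1 (v θ : ℝ) : ℝ := -Real.sqrt (10 * θ) / (3 * v)
/-- Third Lagrangian characteristic speed. -/
def lam3 (v θ : ℝ) : ℝ := Real.sqrt (10 * θ) / (3 * v)
/-- Entropy of the monatomic ideal gas (up to constants). -/
def entropy (v θ : ℝ) : ℝ := Real.log θ + (2 / 3) * Real.log v
/-- Temperature as a function of `v` and entropy `s`. -/
def presTheta (v s : ℝ) : ℝ := Real.exp s * v ^ (-(2 : ℝ) / 3)
/-- `λ₁` as a function of `v` and the entropy. -/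
def lam1s (v s : ℝ) : ℝ := lam1 v (presTheta v s)
/-- Pressure `p = 2θ/(3v)`. -/
def pres (v θ : ℝ) : ℝ := 2 * θ / (3 * v)

/-- Membership in the 1-rarefaction wave curve through `(v₊,u₁₊,θ₊)`. -/
def inR1 (v u1 θ vp u1p θp : ℝ) : Prop :=
  v < vp ∧ entropy v θ = entropy vp θp ∧
    u1 = u1p - ∫ η in vp..v, lam1s η (entropy vp θp)

/-- Membership in the contact discontinuity curve through `(v₊,u₁₊,θ₊)`. -/
def inCD (v u1 θ vp u1p θp : ℝ) : Prop :=
  u1 = u1p ∧ pres v θ = pres vp θp ∧ v ≠ vp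

/-- Membership in the 3-shock curve through `(v₊,u₁₊,θ₊)` with shock speed `s₃`:
Rankine–Hugoniot conditions and the Lax entropy condition. -/
def inS3 (v u1 θ vp u1p θp s3 : ℝ) : Prop :=
  -s3 * (vp - v) - (u1p - u1) = 0 ∧
  -s3 * (u1p - u1) + (pres vp θp - pres v θ) = 0 ∧
  -s3 * ((θp + u1p ^ 2 / 2) - (θ + u1 ^ 2 / 2)) + (pres vp θp * u1p - pres v θ * u1) = 0 ∧
  lam3 vp θp < s3 ∧ s3 < lam3 v θ

/-- Partial derivative in the first (time) variable. -/
def pdt (f : ℝ → ℝ → ℝ) (t x : ℝ) : ℝ := deriv (fun s => f s x) t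
/-- Partial derivative in the second (space) variable. -/
def pdx (f : ℝ → ℝ → ℝ) (t x : ℝ) : ℝ := deriv (fun y => f t y) x

end

noncomputable section

/-- Second space derivative. -/
def pdxx (f : ℝ → ℝ → ℝ) (t x : ℝ) : ℝ := deriv (fun y => pdx f t y) x

/-- `w` is the smooth global solution of the Burgers equation with `tanh(x/σ)`-smoothed
Riemann data `w_± `. -/
def burgersSol (wm wp σ : ℝ) (w : ℝ → ℝ → ℝ) : Prop :=
  ContDiff ℝ (⊤ : ℕ∞) (Function.uncurry w) ∧
  (∀ x : ℝ, w 0 x = (wp + wm) / 2 + ((wp - wm) / 2) * Real.tanh (x / σ)) ∧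
  (∀ t x : ℝ, 0 < t → pdt w t x + w t x * pdx w t x = 0)

/-- `(VR, UR, ΘR)` is the smooth approximate 1-rarefaction wave with right state
`(v₊,u₁₊,θ₊)` and smoothing parameter `σ`, built from the Burgers solution `w` with end
speeds `λ₁(v₋,θ₋) < λ₁(v₊,θ₊)`: the entropy is frozen at `s₊`, `λ₁(V^{R₁},Θ^{R₁}) = w`,
and `U₁^{R₁} = u₁₊ − ∫_{v₊}^{V^{R₁}} λ₁(v,s₊) dv` (the transversal components vanish). -/
def approxRarefaction (vm u1m θm vp u1p θp σ : ℝ)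
    (w VR UR ΘR : ℝ → ℝ → ℝ) : Prop :=
  burgersSol (lam1 vm θm) (lam1 vp θp) σ w ∧
  ContDiff ℝ (⊤ : ℕ∞) (Function.uncurry VR) ∧ ContDiff ℝ (⊤ : ℕ∞) (Function.uncurry UR) ∧
  ContDiff ℝ (⊤ : ℕ∞) (Function.uncurry ΘR) ∧
  ∀ t x : ℝ, 0 < VR t x ∧ 0 < ΘR t x ∧
    entropy (VR t x) (ΘR t x) = entropy vp θp ∧
    lam1 (VR t x) (ΘR t x) = w t x ∧
    UR t x = u1p - ∫ η in vp..(VR t x), lam1s η (entropy vp θp)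

/-- Total strength of the 1-rarefaction wave. -/
def rarStrength (vm u1m θm vp u1p θp : ℝ) : ℝ :=
  |vp - vm| + |u1p - u1m| + |θp - θm|

noncomputable section

/-- The exact self-similar 1-rarefaction wave `(v^{r₁},u^{r₁},θ^{r₁})(x/t)` of the
Riemann problem, connecting `(v₋,u₁₋,θ₋)` to `(v₊,u₁₊,θ₊)`. -/
def rarefactionFan (vm u1m θm vp u1p θp : ℝ) (vr ur θr : ℝ → ℝ) : Prop :=
  (∀ ζ : ℝ, ζ ≤ lam1 vm θm → vr ζ = vm ∧ ur ζ = u1m ∧ θr ζ = θm) ∧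
  (∀ ζ : ℝ, lam1 vp θp ≤ ζ → vr ζ = vp ∧ ur ζ = u1p ∧ θr ζ = θp) ∧
  (∀ ζ : ℝ, lam1 vm θm ≤ ζ → ζ ≤ lam1 vp θp →
    0 < vr ζ ∧ 0 < θr ζ ∧
    entropy (vr ζ) (θr ζ) = entropy vp θp ∧
    lam1 (vr ζ) (θr ζ) = ζ ∧
    ur ζ = u1p - ∫ η in vp..(vr ζ), lam1s η (entropy vp θp))

noncomputable section

lemma aux_char (w : ℝ → ℝ → ℝ) (hw : ContDiff ℝ (⊤ : ℕ∞) (Function.uncurry w))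
    (hB : ∀ t x : ℝ, 0 < t → pdt w t x + w t x * pdx w t x = 0) (x0 t : ℝ) (ht : 0 < t) :
    w t (x0 + t * w 0 x0) = w 0 x0 := by
  set c := w 0 x0 with hc
  have hd : Differentiable ℝ (Function.uncurry w) := hw.differentiable (by simp)
  have hcf : Continuous (fderiv ℝ (Function.uncurry w)) := hw.continuous_fderiv (by simp)
  have hpt : ∀ s x, pdt w s x = fderiv ℝ (Function.uncurry w) (s, x) (1, 0) := by
    intro s x
    have h1 : HasDerivAt (fun s : ℝ => (s, x)) ((1:ℝ), (0:ℝ)) s :=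
      (hasDerivAt_id s).prodMk (hasDerivAt_const s x)
    exact ((hd (s, x)).hasFDerivAt.comp_hasDerivAt s h1).deriv
  have hpx : ∀ s x, pdx w s x = fderiv ℝ (Function.uncurry w) (s, x) (0, 1) := by
    intro s x
    have h1 : HasDerivAt (fun x : ℝ => (s, x)) ((0:ℝ), (1:ℝ)) x :=
      (hasDerivAt_const x s).prodMk (hasDerivAt_id x)
    exact ((hd (s, x)).hasFDerivAt.comp_hasDerivAt x h1).deriv
  let a : ℝ → ℝ := fun s => fderiv ℝ (Function.uncurry w) (s, x0 + s * c) (0, 1)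
  have ha : Continuous a := by
    have : Continuous fun s : ℝ => fderiv ℝ (Function.uncurry w) (s, x0 + s * c) :=
      hcf.comp (by fun_prop)
    exact this.clm_apply continuous_const
  let A : ℝ → ℝ := fun s => ∫ r in (0:ℝ)..s, a r
  have hA : ∀ s, HasDerivAt A (a s) s := fun s =>
    intervalIntegral.integral_hasDerivAt_right (ha.intervalIntegrable _ _)
      (ha.stronglyMeasurableAtFilter _ _) ha.continuousAt
  let g : ℝ → ℝ := fun s => w s (x0 + s * c) - c
  have hg : ∀ s, HasDerivAt g (pdt w s (x0 + s * c) + c * pdx w s (x0 + s * c)) s := by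
    intro s
    have h1 : HasDerivAt (fun s : ℝ => (s, x0 + s * c)) ((1:ℝ), c) s := by
      refine (hasDerivAt_id s).prodMk ?_
      simpa using ((hasDerivAt_id s).mul_const c).const_add x0
    have h2 := (hd (s, x0 + s * c)).hasFDerivAt.comp_hasDerivAt s h1
    have h3 : ((1:ℝ), c) = (1, 0) + c • ((0:ℝ), (1:ℝ)) := by ext <;> simp
    rw [h3, map_add, map_smul, ← hpt, ← hpx] at h2
    exact h2.sub_const c
  let h : ℝ → ℝ := fun s => g s * Real.exp (A s)
  have hh : ∀ s, HasDerivAt h ((pdt w s (x0 + s * c) + c * pdx w s (x0 + s * c)) * Real.exp (A s)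
      + g s * (Real.exp (A s) * a s)) s := fun s => (hg s).mul (hA s).exp
  obtain ⟨s, hs, hse⟩ := exists_hasDerivAt_eq_slope h _ ht
    (fun s _ => (hh s).continuousAt.continuousWithinAt) (fun s _ => hh s)
  have h0 : h 0 = 0 := by simp [h, g, hc]
  have hz : (pdt w s (x0 + s * c) + c * pdx w s (x0 + s * c)) * Real.exp (A s)
      + g s * (Real.exp (A s) * a s) = 0 := by
    have e1 := hB s (x0 + s * c) hs.1
    have e2 : a s = pdx w s (x0 + s * c) := (hpx _ _).symm
    rw [e2]
    simp only [g]
    linear_combination Real.exp (A s) * e1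
  rw [hz, h0, sub_zero, sub_zero, eq_comm, div_eq_zero_iff] at hse
  rcases hse with hse | hse
  · have : g t = 0 := by
      rcases mul_eq_zero.1 hse with h | h
      · exact h
      · exact absurd h (Real.exp_pos _).ne'
    simp only [g] at this
    linarith
  · exact absurd hse ht.ne'

lemma aux_tanh (y : ℝ) : 1 - Real.tanh y ≤ 2 * Real.exp (-2 * y) ∧ Real.tanh y ≤ 1 := by
  rw [Real.tanh_eq_sinh_div_cosh, Real.sinh_eq, Real.cosh_eq]
  have h1 := Real.exp_pos y
  have h2 := Real.exp_pos (-y)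
  have h3 : Real.exp (-2 * y) = Real.exp (-y) * Real.exp (-y) := by rw [← Real.exp_add]; ring_nf
  have h4 : Real.exp y * Real.exp (-y) = 1 := by rw [← Real.exp_add]; simp
  have e : (Real.exp y - Real.exp (-y)) / 2 / ((Real.exp y + Real.exp (-y)) / 2)
      = 1 - 2 * Real.exp (-y) / (Real.exp y + Real.exp (-y)) := by field_simp; ring
  rw [e, h3]
  constructor
  · have : 2 * Real.exp (-y) / (Real.exp y + Real.exp (-y)) ≤
        2 * (Real.exp (-y) * Real.exp (-y)) := by
      rw [div_le_iff₀ (by positivity)]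
      have : 0 < Real.exp (-y) ^ 3 := by positivity
      linear_combination 2 * Real.exp (-y) * h4.symm.le + 2 * this.le
    linarith
  · have : 0 ≤ 2 * Real.exp (-y) / (Real.exp y + Real.exp (-y)) := by positivity
    linarith

lemma aux_exp (σ t y : ℝ) (hσ : 0 < σ) (hσ1 : σ < Real.exp (-1)) (ht : 0 < t)
    (hy : σ * (Real.log (1 + t) + |Real.log σ|) < y) :
    Real.exp (-2 * (y / σ)) ≤ 1 / t * (σ * Real.log (1 + t) + σ * |Real.log σ|) := by
  have hl : Real.log σ < -1 := by rw [Real.log_lt_iff_lt_exp hσ]; exact hσ1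
  have hlt : 0 ≤ Real.log (1 + t) := Real.log_nonneg (by linarith)
  rw [abs_of_neg (by linarith)] at *
  have h1 : Real.log (1 + t) + -Real.log σ < y / σ := by rw [lt_div_iff₀ hσ]; linarith
  have h2 : Real.exp (-2 * (y / σ)) ≤ Real.exp (Real.log σ - Real.log (1 + t)) :=
    Real.exp_le_exp.2 (by linarith)
  rw [Real.exp_sub, Real.exp_log hσ, Real.exp_log (by linarith)] at h2
  refine h2.trans ?_
  rw [one_div_mul_eq_div]
  have : σ ≤ σ * Real.log (1 + t) + σ * -Real.log σ := by nlinarith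
  gcongr
  all_goals linarith

lemma aux_scalar (wm wp σ : ℝ) (hlt : wm < wp) (w : ℝ → ℝ → ℝ) (hB : burgersSol wm wp σ w)
    (hσ : 0 < σ) (hσ1 : σ < Real.exp (-1)) (t x : ℝ) (ht : 0 < t) :
    w t x ∈ Set.Icc wm wp ∧ |w t x - max wm (min (x / t) wp)| ≤
      (1 + (wp - wm)) * (1 / t * (σ * Real.log (1 + t) + σ * |Real.log σ|)) := by
  obtain ⟨hw, h0, hpde⟩ := hB
  have hneg : ∀ y : ℝ, Real.tanh (-y) = - Real.tanh y := Real.tanh_neg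
  have hb : ∀ y, w 0 y ∈ Set.Icc wm wp := by
    intro y
    have h1 := (aux_tanh (y / σ)).2
    have h2 := (aux_tanh (-(y / σ))).2
    rw [hneg] at h2
    rw [h0]
    constructor <;> nlinarith
  have hcont : Continuous fun y => y + t * w 0 y := by
    have : Continuous fun y => w 0 y := hw.continuous.comp (by fun_prop : Continuous fun y : ℝ => ((0:ℝ), y))
    fun_prop
  obtain ⟨x0, hx0⟩ : ∃ x0, x0 + t * w 0 x0 = x := by
    have := intermediate_value_Icc (a := x - t * wp) (b := x - t * wm) (by nlinarith)
      hcont.continuousOn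
    obtain ⟨y, _, hy⟩ := this (show x ∈ _ by
      have h1 := hb (x - t * wp)
      have h2 := hb (x - t * wm)
      constructor
      · nlinarith [h1.2]
      · nlinarith [h2.1])
    exact ⟨y, hy⟩
  have hwx : w t x = w 0 x0 := by rw [← hx0]; exact aux_char w hw hpde x0 t ht
  have hxt : x / t = x0 / t + w 0 x0 := by rw [← hx0]; field_simp
  rw [hwx, hxt]
  refine ⟨hb x0, ?_⟩
  have hW := hb x0
  set W := w 0 x0 with hWdef
  obtain ⟨hW1, hW2⟩ := hW
  have hlog : 0 ≤ Real.log (1 + t) := Real.log_nonneg (by linarith)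
  set B := 1 / t * (σ * Real.log (1 + t) + σ * |Real.log σ|) with hBdef
  have hB0 : 0 ≤ B := by positivity
  by_cases hc1 : σ * (Real.log (1 + t) + |Real.log σ|) < x0
  · have hp : 0 < x0 / t := by
      have : 0 < x0 := lt_of_le_of_lt (by positivity) hc1
      positivity
    have hE := aux_exp σ t x0 hσ hσ1 ht hc1
    have h1 : W ≤ max wm (min (x0 / t + W) wp) := le_max_of_le_right (le_min (by linarith) hW2)
    have h2 : max wm (min (x0 / t + W) wp) ≤ wp := max_le hlt.le (min_le_right _ _)
    have h3 := (aux_tanh (x0 / σ)).1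
    have h4 : wp - W ≤ (wp - wm) * B := by
      rw [hWdef, h0]
      have : 1 - Real.tanh (x0 / σ) ≤ 2 * B := by linarith
      nlinarith
    rw [abs_of_nonpos (by linarith)]
    nlinarith
  by_cases hc2 : σ * (Real.log (1 + t) + |Real.log σ|) < -x0
  · have hp : x0 / t < 0 := by
      have : 0 < -x0 := lt_of_le_of_lt (by positivity) hc2
      exact div_neg_of_neg_of_pos (by linarith) ht
    have hE := aux_exp σ t (-x0) hσ hσ1 ht hc2
    have h1 : max wm (min (x0 / t + W) wp) ≤ W := max_le hW1 ((min_le_left _ _).trans (by linarith))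
    have h2 : wm ≤ max wm (min (x0 / t + W) wp) := le_max_left _ _
    have h3 := (aux_tanh (-x0 / σ)).1
    have h4 : W - wm ≤ (wp - wm) * B := by
      rw [hWdef, h0]
      have : 1 - Real.tanh (-x0 / σ) ≤ 2 * B := by linarith
      rw [neg_div, hneg] at this
      nlinarith
    rw [abs_of_nonneg (by linarith)]
    nlinarith
  · have h1 : |x0| / t ≤ B := by
      rw [hBdef, one_div_mul_eq_div]
      gcongr
      rw [abs_le]; constructor <;> linarith
    have h2 : |W - max wm (min (x0 / t + W) wp)| ≤ |x0| / t := by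
      have e : W = max wm (min W wp) := by rw [min_eq_left hW2, max_eq_right hW1]
      have e1 := abs_max_sub_max_le_max wm (min W wp) wm (min (x0 / t + W) wp)
      have e2 := abs_min_sub_min_le_max W wp (x0 / t + W) wp
      rw [← e] at e1
      have e3 : |W - (x0 / t + W)| = |x0| / t := by
        rw [show W - (x0 / t + W) = -(x0 / t) by ring, abs_neg, abs_div, abs_of_pos ht]
      rw [e3] at e2
      have : 0 ≤ |x0| / t := by positivity
      simp only [sub_self, abs_zero] at e1 e2
      rw [max_eq_left this] at e2
      exact e1.trans (max_le this e2)
    nlinarith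

/-- sound-speed constant -/
def auxK (s : ℝ) : ℝ := Real.sqrt (10 * Real.exp s) / 3

def auxV (s w : ℝ) : ℝ := (-w / auxK s) ^ (-(3:ℝ) / 4)

def auxU (s vp u1p w : ℝ) : ℝ :=
  u1p - 3 * auxK s * (auxV s w ^ (-(1:ℝ) / 3) - vp ^ (-(1:ℝ) / 3))

def auxE (s vp u1p w : ℝ) : ℝ :=
  Real.exp s * auxV s w ^ (-(2:ℝ) / 3) + auxU s vp u1p w ^ 2 / 2

lemma auxK_pos (s : ℝ) : 0 < auxK s := by unfold auxK; positivity

lemma aux_lam1s (v s : ℝ) (hv : 0 < v) : lam1s v s = -auxK s * v ^ (-(4:ℝ) / 3) := by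
  unfold lam1s lam1 presTheta auxK
  have h1 : Real.sqrt (10 * (Real.exp s * v ^ (-(2:ℝ) / 3)))
      = Real.sqrt (10 * Real.exp s) * v ^ (-(1:ℝ) / 3) := by
    rw [← mul_assoc, Real.sqrt_mul (by positivity)]
    congr 1
    rw [Real.sqrt_eq_rpow, ← Real.rpow_mul hv.le]
    norm_num
  have h2 : v ^ (-(4:ℝ) / 3) = v ^ (-(1:ℝ) / 3) / v := by
    rw [show (-(4:ℝ) / 3) = -(1:ℝ) / 3 - 1 by norm_num, Real.rpow_sub_one hv.ne']
  rw [h1, h2]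
  field_simp

lemma aux_theta (v θ s : ℝ) (hv : 0 < v) (hθ : 0 < θ) (hs : entropy v θ = s) :
    θ = Real.exp s * v ^ (-(2:ℝ) / 3) := by
  rw [Real.rpow_def_of_pos hv, ← Real.exp_add, ← hs]
  unfold entropy
  rw [show Real.log θ + 2 / 3 * Real.log v + Real.log v * (-2 / 3) = Real.log θ by ring,
    Real.exp_log hθ]

lemma aux_lam1 (v θ s : ℝ) (hv : 0 < v) (hθ : 0 < θ) (hs : entropy v θ = s) :
    lam1 v θ = -auxK s * v ^ (-(4:ℝ) / 3) := by
  rw [← aux_lam1s v s hv, lam1s, presTheta, ← aux_theta v θ s hv hθ hs]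

lemma aux_state (v u θ s vp u1p : ℝ) (hv : 0 < v) (hvp : 0 < vp) (hθ : 0 < θ)
    (hs : entropy v θ = s) (hu : u = u1p - ∫ η in vp..v, lam1s η s) :
    v = auxV s (lam1 v θ) ∧ u = auxU s vp u1p (lam1 v θ) ∧
      θ + u ^ 2 / 2 = auxE s vp u1p (lam1 v θ) := by
  have hK := auxK_pos s
  have h1 : v = auxV s (lam1 v θ) := by
    rw [aux_lam1 v θ s hv hθ hs, auxV]
    rw [show -(-auxK s * v ^ (-(4:ℝ) / 3)) / auxK s = v ^ (-(4:ℝ) / 3) by field_simp,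
      ← Real.rpow_mul hv.le]
    norm_num
  have h2 : u = auxU s vp u1p (lam1 v θ) := by
    rw [auxU, ← h1, hu]
    have : ∫ η in vp..v, lam1s η s = ∫ η in vp..v, -auxK s * η ^ (-(4:ℝ) / 3) := by
      refine intervalIntegral.integral_congr fun η hη => aux_lam1s η s ?_
      exact lt_of_lt_of_le (lt_min hvp hv) hη.1
    rw [this, intervalIntegral.integral_const_mul, integral_rpow]
    · norm_num
      ring
    · right
      refine ⟨by norm_num, fun h => ?_⟩
      exact absurd (lt_of_lt_of_le (lt_min hvp hv) h.1) (lt_irrefl _)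
  refine ⟨h1, h2, ?_⟩
  rw [auxE, ← h2, ← h1, ← aux_theta v θ s hv hθ hs]

lemma aux_lip (f : ℝ → ℝ) (a b : ℝ) (hf : ∀ w ∈ Set.Icc a b, ContDiffAt ℝ 1 f w) :
    ∃ K : ℝ, 0 ≤ K ∧ ∀ x ∈ Set.Icc a b, ∀ y ∈ Set.Icc a b, |f x - f y| ≤ K * |x - y| := by
  have hc : ContDiffOn ℝ 1 f (Set.Icc a b) := fun w hw => (hf w hw).contDiffWithinAt
  obtain ⟨K, hK⟩ := hc.exists_lipschitzOnWith one_ne_zero (convex_Icc a b) isCompact_Icc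
  refine ⟨K, K.2, fun x hx y hy => ?_⟩
  simpa [Real.dist_eq] using hK.dist_le_mul x hx y hy

/-- Lemma 2.1 (4): there are `C, σ₀ > 0` such that for every
`σ ∈ (0,σ₀)` and `t > 0`, the approximate rarefaction wave (with smoothing parameter
`σ`) is within `(C/t)[σ ln(1+t) + σ|ln σ|]` of the exact self-similar rarefaction wave
`(v^{r₁},u^{r₁},E^{r₁})(x/t)`, uniformly in `x`. -/
theorem approx_rarefaction_close_to_exact
    (vm u1m θm vp u1p θp : ℝ)
    (hvm : 0 < vm) (hvp : 0 < vp) (hθm : 0 < θm) (hθp : 0 < θp)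
    (hR1 : inR1 vm u1m θm vp u1p θp)
    (w VR UR ΘR : ℝ → ℝ → ℝ → ℝ)
    (hprof : ∀ σ : ℝ, 0 < σ →
      approxRarefaction vm u1m θm vp u1p θp σ (w σ) (VR σ) (UR σ) (ΘR σ))
    (vr ur θr : ℝ → ℝ)
    (hfan : rarefactionFan vm u1m θm vp u1p θp vr ur θr) :
    ∃ C σ₀ : ℝ, 0 < C ∧ 0 < σ₀ ∧
      ∀ σ : ℝ, 0 < σ → σ < σ₀ →
        ∀ t : ℝ, 0 < t → ∀ x : ℝ,
          |VR σ t x - vr (x / t)| + |UR σ t x - ur (x / t)| +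
              |(ΘR σ t x + (UR σ t x) ^ 2 / 2) - (θr (x / t) + (ur (x / t)) ^ 2 / 2)|
            ≤ C / t * (σ * Real.log (1 + t) + σ * |Real.log σ|) := by
  obtain ⟨hv, hent, hu⟩ := hR1
  set s := entropy vp θp with hs
  set wm := lam1 vm θm with hwm
  set wp := lam1 vp θp with hwp
  have hK := auxK_pos s
  have ewm : wm = -auxK s * vm ^ (-(4:ℝ) / 3) := aux_lam1 vm θm s hvm hθm hent
  have ewp : wp = -auxK s * vp ^ (-(4:ℝ) / 3) := aux_lam1 vp θp s hvp hθp rfl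
  have hlt : wm < wp := by
    have : vp ^ (-(4:ℝ) / 3) < vm ^ (-(4:ℝ) / 3) :=
      Real.rpow_lt_rpow_of_neg hvm hv (by norm_num)
    rw [ewm, ewp]; nlinarith
  have hwp0 : wp < 0 := by
    have : 0 < vp ^ (-(4:ℝ) / 3) := by positivity
    rw [ewp]; nlinarith
  have hpos : ∀ w ∈ Set.Icc wm wp, 0 < -w / auxK s := fun w hw =>
    div_pos (by linarith [hw.2]) hK
  have hVpos : ∀ w ∈ Set.Icc wm wp, 0 < auxV s w := fun w hw => Real.rpow_pos_of_pos (hpos w hw) _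
  have cV : ∀ w ∈ Set.Icc wm wp, ContDiffAt ℝ 1 (auxV s) w := fun w hw =>
    ContDiffAt.rpow_const_of_ne (by fun_prop) (hpos w hw).ne'
  have cU : ∀ w ∈ Set.Icc wm wp, ContDiffAt ℝ 1 (auxU s vp u1p) w := fun w hw =>
    contDiffAt_const.sub (contDiffAt_const.mul
      (((cV w hw).rpow_const_of_ne (hVpos w hw).ne').sub contDiffAt_const))
  have cE : ∀ w ∈ Set.Icc wm wp, ContDiffAt ℝ 1 (auxE s vp u1p) w := fun w hw =>
    (contDiffAt_const.mul ((cV w hw).rpow_const_of_ne (hVpos w hw).ne')).add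
      (((cU w hw).pow 2).div_const 2)
  obtain ⟨K1, hK1, L1⟩ := aux_lip _ _ _ cV
  obtain ⟨K2, hK2, L2⟩ := aux_lip _ _ _ cU
  obtain ⟨K3, hK3, L3⟩ := aux_lip _ _ _ cE
  obtain ⟨f1, f2, f3⟩ := hfan
  have hfan' : ∀ ζ, vr ζ = auxV s (max wm (min ζ wp)) ∧ ur ζ = auxU s vp u1p (max wm (min ζ wp)) ∧
      θr ζ + ur ζ ^ 2 / 2 = auxE s vp u1p (max wm (min ζ wp)) := by
    intro ζ
    have key : ∀ z, wm ≤ z → z ≤ wp → vr z = auxV s z ∧ ur z = auxU s vp u1p z ∧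
        θr z + ur z ^ 2 / 2 = auxE s vp u1p z := by
      intro z h1 h2
      obtain ⟨g1, g2, g3, g4, g5⟩ := f3 z h1 h2
      have := aux_state (vr z) (ur z) (θr z) s vp u1p g1 hvp g2 g3 g5
      rwa [g4] at this
    rcases le_total ζ wm with h | h
    · rw [min_eq_left (h.trans hlt.le), max_eq_left h]
      obtain ⟨a1, a2, a3⟩ := f1 ζ h
      obtain ⟨b1, b2, b3⟩ := f1 wm le_rfl
      have := key wm le_rfl hlt.le
      rw [a1, a2, a3]
      rwa [b1, b2, b3] at this
    rcases le_total wp ζ with h' | h'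
    · rw [min_eq_right h', max_eq_right hlt.le]
      obtain ⟨a1, a2, a3⟩ := f2 ζ h'
      obtain ⟨b1, b2, b3⟩ := f2 wp le_rfl
      have := key wp hlt.le le_rfl
      rw [a1, a2, a3]
      rwa [b1, b2, b3] at this
    · rw [min_eq_left h', max_eq_right h]
      exact key ζ h h'
  have hd : 0 < 1 + (wp - wm) := by linarith
  refine ⟨(K1 + K2 + K3 + 1) * (1 + (wp - wm)), Real.exp (-1), by positivity,
    Real.exp_pos _, fun σ hσ hσ1 t ht x => ?_⟩
  obtain ⟨hB, _, _, _, hst⟩ := hprof σ hσ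
  obtain ⟨g1, g2, g3, g4, g5⟩ := hst t x
  obtain ⟨p1, p2, p3⟩ := aux_state _ _ _ s vp u1p g1 hvp g2 g3 g5
  rw [g4] at p1 p2 p3
  obtain ⟨q1, q2, q3⟩ := hfan' (x / t)
  obtain ⟨r1, r2⟩ := aux_scalar wm wp σ hlt (w σ) hB hσ hσ1 t x ht
  rw [p3, q3, p2, q2, p1, q1]
  set c := max wm (min (x / t) wp) with hcdef
  have hc : c ∈ Set.Icc wm wp := ⟨le_max_left _ _, max_le hlt.le (min_le_right _ _)⟩
  have l1 := L1 _ r1 _ hc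
  have l2 := L2 _ r1 _ hc
  have l3 := L3 _ r1 _ hc
  have hlog : 0 ≤ Real.log (1 + t) := Real.log_nonneg (by linarith)
  calc _ ≤ (K1 + K2 + K3 + 1) * |w σ t x - c| := by
        have := abs_nonneg (w σ t x - c)
        linarith
    _ ≤ (K1 + K2 + K3 + 1) * ((1 + (wp - wm)) *
          (1 / t * (σ * Real.log (1 + t) + σ * |Real.log σ|))) := by gcongr
    _ = _ := by ring
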